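/- arXiv:math/0007075 — 2 statements merged into one kernel-verified Lean document; each statement's English description precedes it below -/
import Mathlib

section
/- Let f = p/q be a rational function of two real variables that is bounded near a point v₀ = (x₀,y₀). Then the set of limiting values D_f(v₀) is exactly the closed interval [inf D_f(v₀), sup D_f(v₀)]; in particular D_f(v₀) is a nonempty compact interval. -/
/-!
Coprime plane polynomials have only finitely many common zeros: a Bézout identity over `ℝ(y)`,
cleared of denominators, shows that `y` is a zero of a nonzero polynomial at every common zero,
and likewise for `x`. Where `p / q` is bounded, `|p| ≤ M |q|` extends by density to the zeros of
`q`, so every zero of `q` near `v₀` is a common zero; hence `q` has no zero in a punctured disc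
around `v₀`. Punctured discs are connected, so the intermediate value theorem makes the cluster set
of `p / q` along them order-connected, and boundedness makes it nonempty and compact.
-/

open MvPolynomial Filter Topology

/-- Evaluation of a two-variable real polynomial at a point of `ℝ²`. -/
noncomputable def pev (p : MvPolynomial (Fin 2) ℝ) (v : ℝ × ℝ) : ℝ :=
  MvPolynomial.eval ![v.1, v.2] p

/-- `p/q` is bounded near `v₀`. -/
def BoundedNear (p q : MvPolynomial (Fin 2) ℝ) (v₀ : ℝ × ℝ) : Prop :=
  ∃ U ∈ nhds v₀, ∃ M : ℝ, ∀ v ∈ U, pev q v ≠ 0 → |pev p v / pev q v| ≤ M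

/-- The set of limiting values of `p/q` at `v₀`. -/
def LimVals (p q : MvPolynomial (Fin 2) ℝ) (v₀ : ℝ × ℝ) : Set ℝ :=
  {d | ∃ v : ℕ → ℝ × ℝ, Filter.Tendsto v Filter.atTop (nhds v₀) ∧ (∀ n, v n ≠ v₀) ∧
    (∀ n, pev q (v n) ≠ 0) ∧
    Filter.Tendsto (fun n => pev p (v n) / pev q (v n)) Filter.atTop (nhds d)}

section GaussLemma

open Polynomial nonZeroDivisors

variable {R : Type*} [CommRing R] [IsDomain R] [IsGCDMonoid R]
  (K : Type*) [Field K] [Algebra R K] [IsFractionRing R K]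

theorem exists_isPrimitive_associated_map {f : K[X]} (hf : f ≠ 0) :
    ∃ g : R[X], g.IsPrimitive ∧ Associated (g.map (algebraMap R K)) f := by
  let : NormalizedGCDMonoid R := Nonempty.some inferInstance
  have isUnit_C_algebraMap {r : R} (hr : r ≠ 0) : IsUnit (Polynomial.C (algebraMap R K r)) :=
    isUnit_C.2 (IsUnit.mk0 _ ((map_ne_zero_iff _ (IsFractionRing.injective R K)).2 hr))
  set N := IsLocalization.integerNormalization R⁰ f
  have hN : N ≠ 0 := IsFractionRing.integerNormalization_eq_zero_iff.not.2 hf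
  obtain ⟨b, hb, hNf⟩ := IsLocalization.integerNormalization_spec R⁰ f
  rw [← algebraMap_smul K b f, Polynomial.smul_eq_C_mul] at hNf
  refine ⟨N.primPart, N.isPrimitive_primPart, ?_⟩
  have hcontent : Associated (N.map (algebraMap R K)) (N.primPart.map (algebraMap R K)) := by
    conv_lhs => rw [N.eq_C_content_mul_primPart, Polynomial.map_mul, Polynomial.map_C]
    exact associated_unit_mul_left _ _ (isUnit_C_algebraMap (content_eq_zero_iff.not.2 hN))
  refine hcontent.symm.trans ?_
  rw [hNf]
  exact associated_unit_mul_left _ _ (isUnit_C_algebraMap (nonZeroDivisors.ne_zero hb))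

theorem isRelPrime_map_algebraMap {P Q : R[X]} (h : IsRelPrime P Q) :
    IsRelPrime (P.map (algebraMap R K)) (Q.map (algebraMap R K)) := by
  intro d hdP hdQ
  have hinj := IsFractionRing.injective R K
  have hd : d ≠ 0 := by
    rintro rfl
    rw [zero_dvd_iff, Polynomial.map_eq_zero_iff hinj] at hdP hdQ
    subst hdP hdQ
    exact not_isUnit_zero (h dvd_rfl dvd_rfl)
  obtain ⟨g, hg, hgd⟩ := exists_isPrimitive_associated_map (R := R) K hd
  have hgu : IsUnit g := h
    (hg.dvd_of_fraction_map_dvd_fraction_map (hgd.dvd.trans hdP))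
    (hg.dvd_of_fraction_map_dvd_fraction_map (hgd.dvd.trans hdQ))
  exact hgd.isUnit (hgu.map (mapRingHom (algebraMap R K)))

theorem exists_mul_add_mul_eq_C_of_isRelPrime {P Q : R[X]} (h : IsRelPrime P Q) :
    ∃ c : R, c ≠ 0 ∧ ∃ A B : R[X], A * P + B * Q = Polynomial.C c := by
  let K := FractionRing R
  let := Polynomial.algebra R K
  have := Polynomial.isLocalization R⁰ K
  let I : Ideal R[X] := Ideal.span {P, Q}
  have hI : I.map (algebraMap R[X] K[X]) = ⊤ := by
    rw [Ideal.map_span, Set.image_pair]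
    have hcoprime := isRelPrime_iff_isCoprime.1 (isRelPrime_map_algebraMap K h)
    exact (Ideal.eq_top_iff_one _).2 (Ideal.mem_span_pair.2 hcoprime)
  have hmeet : ¬Disjoint ((R⁰.map Polynomial.C : Submonoid R[X]) : Set R[X]) I := fun hdisj ↦
    (IsLocalization.map_algebraMap_ne_top_iff_disjoint (R⁰.map Polynomial.C) K[X] I).2 hdisj hI
  obtain ⟨_, ⟨c, hc, rfl⟩, hcI⟩ := Set.not_disjoint_iff.1 hmeet
  exact ⟨c, nonZeroDivisors.ne_zero hc, Ideal.mem_span_pair.1 hcI⟩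

end GaussLemma

section CommonZeros

variable {R : Type*} [CommRing R] [IsDomain R]

theorem finite_setOfPred_eval_eq_zero {σ : Type*} [Unique σ] {c : MvPolynomial σ R} (hc : c ≠ 0) :
    {s : σ → R | eval s c = 0}.Finite := by
  by_contra hinf
  let t : Set R := (· default) '' {s : σ → R | eval s c = 0}
  have ht : t.Infinite := Set.Infinite.image (fun s _ s' _ h ↦ funext (Unique.forall_iff.2 h)) hinf
  refine hc (funext_set (fun _ ↦ t) (fun _ ↦ ht) fun x hx ↦ ?_)
  obtain ⟨s, hs, hsx⟩ := hx default trivial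
  rw [map_zero, ← funext (Unique.forall_iff.2 hsx)]
  exact hs

variable [UniqueFactorizationMonoid R]

theorem exists_ne_zero_eval_tail_eq_zero_of_isRelPrime {n : ℕ}
    {p q : MvPolynomial (Fin (n + 1)) R} (h : IsRelPrime p q) :
    ∃ c : MvPolynomial (Fin n) R, c ≠ 0 ∧
      ∀ v, eval v p = 0 → eval v q = 0 → eval (Fin.tail v) c = 0 := by
  let e := finSuccEquiv R n
  have he : IsRelPrime (e p) (e q) := .of_map e.symm (by simpa using h)
  obtain ⟨c, hc, A, B, hAB⟩ := exists_mul_add_mul_eq_C_of_isRelPrime he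
  refine ⟨c, hc, fun v hp hq ↦ ?_⟩
  rw [← Fin.cons_self_tail v, eval_eq_eval_mv_eval'] at hp hq
  have hAB_v := congrArg (fun P ↦ Polynomial.eval (v 0) (P.map (eval (Fin.tail v)))) hAB
  simpa [e, hp, hq] using hAB_v.symm

theorem finite_image_one_commonZeros_of_isRelPrime {p q : MvPolynomial (Fin 2) R}
    (h : IsRelPrime p q) : ((· 1) '' {v | eval v p = 0 ∧ eval v q = 0}).Finite := by
  obtain ⟨c, hc, hcv⟩ := exists_ne_zero_eval_tail_eq_zero_of_isRelPrime h
  refine ((finite_setOfPred_eval_eq_zero hc).image (· 0)).subset ?_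
  rintro _ ⟨v, ⟨hp, hq⟩, rfl⟩
  exact ⟨Fin.tail v, hcv v hp hq, rfl⟩

theorem finite_commonZeros_of_isRelPrime {p q : MvPolynomial (Fin 2) R}
    (h : IsRelPrime p q) : {v | eval v p = 0 ∧ eval v q = 0}.Finite := by
  suffices H : ∀ i, ((· i) '' {v | eval v p = 0 ∧ eval v q = 0}).Finite from
    (Set.Finite.pi' H).subset fun v hv i ↦ ⟨v, hv, rfl⟩
  intro i
  let e := renameEquiv R (Equiv.swap i 1)
  have he : IsRelPrime (e p) (e q) := .of_map e.symm (by simpa using h)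
  refine (finite_image_one_commonZeros_of_isRelPrime he).subset ?_
  rintro _ ⟨v, ⟨hp, hq⟩, rfl⟩
  refine ⟨v ∘ Equiv.swap i 1, ?_, by simp⟩
  have hswap : (v ∘ Equiv.swap i 1) ∘ Equiv.swap i 1 = v := by ext; simp
  simp [e, eval_rename, hswap, hp, hq]

end CommonZeros

section Density

theorem dense_setOfPred_eval_ne_zero {R σ : Type*} [CommRing R] [IsDomain R] [TopologicalSpace R]
    [T1Space R] [∀ x : R, (𝓝[≠] x).NeBot] {q : MvPolynomial σ R} (hq : q ≠ 0) :
    Dense {v : σ → R | eval v q ≠ 0} := by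
  change Dense {v : σ → R | eval v q = 0}ᶜ
  rw [← interior_eq_empty_iff_dense_compl, Set.eq_empty_iff_forall_notMem]
  intro v hv
  rw [mem_interior_iff_mem_nhds, nhds_pi, Filter.mem_pi] at hv
  obtain ⟨I, -, t, ht, hsub⟩ := hv
  refine hq (funext_set t (fun i ↦ infinite_of_mem_nhds (v i) (ht i)) fun x hx ↦ ?_)
  simpa using hsub fun i _ ↦ hx i trivial

theorem eventually_norm_le_mul_norm_of_norm_div_le {X 𝕜 : Type*} [TopologicalSpace X]
    [NormedField 𝕜] {f g : X → 𝕜} (hf : Continuous f) (hg : Continuous g)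
    (hdense : Dense {x | g x ≠ 0}) {x₀ : X} {M : ℝ}
    (hM : ∀ᶠ x in 𝓝 x₀, g x ≠ 0 → ‖f x / g x‖ ≤ M) : ∀ᶠ x in 𝓝 x₀, ‖f x‖ ≤ M * ‖g x‖ := by
  filter_upwards [hM.eventually_nhds] with x hx
  have hclosed : IsClosed {y | ‖f y‖ ≤ M * ‖g y‖} :=
    isClosed_le hf.norm (continuous_const.mul hg.norm)
  refine hclosed.closure_subset (mem_closure_iff_frequently.2 ?_)
  have hne : ∃ᶠ y in 𝓝 x, g y ≠ 0 := mem_closure_iff_frequently.1 (hdense x)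
  refine (hne.and_eventually hx).mono fun y ⟨hy, hMy⟩ ↦ ?_
  rw [Set.mem_ofPred_eq, ← div_le_iff₀ (norm_pos_iff.2 hy), ← norm_div]
  exact hMy hy

end Density

section ClusterSet

theorem isConnected_ball_diff_singleton {E : Type*} [NormedAddCommGroup E] [NormedSpace ℝ E]
    (hE : 1 < Module.rank ℝ E) (c : E) {r : ℝ} (hr : 0 < r) :
    IsConnected (Metric.ball c r \ {c}) := by
  let φ := OpenPartialHomeomorph.univBall c r
  have hφ_source : φ.source = Set.univ := OpenPartialHomeomorph.univBall_source c r
  have hφ_inj : Function.Injective φ := Set.injOn_univ.1 (hφ_source ▸ φ.injOn)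
  have himage : φ '' {0}ᶜ = Metric.ball c r \ {c} := by
    rw [Set.compl_eq_univ_sdiff, Set.image_sdiff hφ_inj, Set.image_singleton, ← hφ_source,
      φ.image_source_eq_target, OpenPartialHomeomorph.univBall_target c hr,
      OpenPartialHomeomorph.univBall_apply_zero]
  rw [← himage]
  exact (isConnected_compl_singleton_of_one_lt_rank hE 0).image φ
    (OpenPartialHomeomorph.continuous_univBall c r).continuousOn

variable {X Y : Type*} [TopologicalSpace Y] {l : Filter X} {f : X → Y}

theorem setOfPred_mapClusterPt_subset {K : Set Y} (hK : IsClosed K) (hf : ∀ᶠ x in l, f x ∈ K) :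
    {y | MapClusterPt y l f} ⊆ K := fun _ hy ↦
  isClosed_iff_clusterPt.1 hK _ (ClusterPt.mono hy (Filter.le_principal_iff.2 hf))

theorem ordConnected_setOfPred_mapClusterPt [TopologicalSpace X] [LinearOrder Y]
    [OrderClosedTopology Y] {ι : Sort*} {b : ι → Prop} {s : ι → Set X} (hl : l.HasBasis b s)
    (hs : ∀ i, b i → IsPreconnected (s i)) (hf : ∀ᶠ x in l, ContinuousAt f x) :
    {y | MapClusterPt y l f}.OrdConnected := by
  refine Set.ordConnected_iff.2 fun y₁ hy₁ y₂ hy₂ _ c hc ↦ ?_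
  rcases hc.1.eq_or_lt with rfl | hy₁c
  · exact hy₁
  rcases hc.2.eq_or_lt with rfl | hcy₂
  · exact hy₂
  have hcf : ∃ᶠ x in l, f x = c := by
    refine frequently_iff.2 fun {U} hU ↦ ?_
    obtain ⟨i, hi, hsi⟩ := hl.mem_iff.1 (inter_mem hU hf)
    have hsl := hl.mem_of_mem hi
    obtain ⟨x₁, hx₁c, hx₁⟩ :=
      ((hy₁.frequently (Iio_mem_nhds hy₁c)).and_eventually hsl).exists
    obtain ⟨x₂, hcx₂, hx₂⟩ :=
      ((hy₂.frequently (Ioi_mem_nhds hcy₂)).and_eventually hsl).exists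
    obtain ⟨x, hx, hxc⟩ := (hs i hi).intermediate_value hx₁ hx₂
      (fun z hz ↦ (hsi hz).2.continuousWithinAt) ⟨le_of_lt hx₁c, le_of_lt hcx₂⟩
    exact ⟨x, (hsi hx).1, hxc⟩
  exact mapClusterPt_iff_frequently.2 fun V hV ↦ hcf.mono fun x hx ↦ hx ▸ mem_of_mem_nhds hV

theorem mapClusterPt_nhdsWithin_iff_seq [TopologicalSpace X] [FirstCountableTopology X]
    [FirstCountableTopology Y] {s : Set X} {x : X} {y : Y} :
    MapClusterPt y (𝓝[s] x) f ↔ ∃ u : ℕ → X, (∀ n, u n ∈ s) ∧ Tendsto u atTop (𝓝 x) ∧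
      Tendsto (f ∘ u) atTop (𝓝 y) := by
  constructor
  · intro h
    obtain ⟨u, hfu, hu⟩ := h.exists_seq_tendsto
    obtain ⟨N, hN⟩ := eventually_atTop.1 (hu.eventually_mem self_mem_nhdsWithin)
    exact ⟨fun n ↦ u (n + N), fun n ↦ hN _ (Nat.le_add_left N n),
      (tendsto_nhds_of_tendsto_nhdsWithin hu).comp (tendsto_add_atTop_nat N),
      hfu.comp (tendsto_add_atTop_nat N)⟩
  · rintro ⟨u, hus, hu, hfu⟩
    exact .of_comp (tendsto_nhdsWithin_iff.2 ⟨hu, .of_forall hus⟩) hfu.mapClusterPt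

end ClusterSet

section RationalFunction

variable {p q : MvPolynomial (Fin 2) ℝ} {v₀ : ℝ × ℝ}

theorem continuous_pev (p : MvPolynomial (Fin 2) ℝ) : Continuous (pev p) :=
  (continuous_eval p).comp Homeomorph.finTwoArrow.symm.continuous

theorem dense_setOfPred_pev_ne_zero (hq : q ≠ 0) : Dense {v | pev q v ≠ 0} :=
  (dense_setOfPred_eval_ne_zero hq).preimage Homeomorph.finTwoArrow.symm.isOpenMap

theorem finite_commonZeros_pev_of_isRelPrime (h : IsRelPrime p q) :
    {v | pev p v = 0 ∧ pev q v = 0}.Finite :=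
  (finite_commonZeros_of_isRelPrime h).preimage Homeomorph.finTwoArrow.symm.injective.injOn

theorem BoundedNear.exists_eventually (hb : BoundedNear p q v₀) :
    ∃ M, ∀ᶠ v in 𝓝 v₀, pev q v ≠ 0 → |pev p v / pev q v| ≤ M :=
  let ⟨_, hU, M, hM⟩ := hb
  ⟨M, mem_of_superset hU hM⟩

theorem BoundedNear.eventually_pev_ne_zero (hb : BoundedNear p q v₀) (hq : q ≠ 0)
    (h : IsRelPrime p q) : ∀ᶠ v in 𝓝[≠] v₀, pev q v ≠ 0 := by
  obtain ⟨M, hM⟩ := hb.exists_eventually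
  have hle : ∀ᶠ v in 𝓝 v₀, |pev p v| ≤ M * |pev q v| :=
    eventually_norm_le_mul_norm_of_norm_div_le (continuous_pev p) (continuous_pev q)
      (dense_setOfPred_pev_ne_zero hq) hM
  have hcommon : {v | pev p v = 0 ∧ pev q v = 0}ᶜ ∈ 𝓝[≠] v₀ := by
    have hcodiscrete := (finite_commonZeros_pev_of_isRelPrime h).compl_mem_codiscrete
    simpa only [compl_compl] using disjoint_principal_right.1 (mem_codiscrete.1 hcodiscrete v₀)
  filter_upwards [hcommon, nhdsWithin_le_nhds hle] with v hv hpq hqv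
  exact hv ⟨by simpa [hqv] using hpq, hqv⟩

theorem limVals_eq_setOfPred_mapClusterPt (hq : ∀ᶠ v in 𝓝[≠] v₀, pev q v ≠ 0) :
    LimVals p q v₀ = {d | MapClusterPt d (𝓝[≠] v₀) fun v ↦ pev p v / pev q v} := by
  have hl : 𝓝[≠] v₀ = 𝓝[{v | v ≠ v₀ ∧ pev q v ≠ 0}] v₀ :=
    nhdsWithin_eq_iff_eventuallyEq.2 (by
      filter_upwards [eventually_nhdsWithin_iff.1 hq] with v hv
      exact propext ⟨fun hne ↦ ⟨hne, hv hne⟩, And.left⟩)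
  ext d
  rw [hl, Set.mem_ofPred_eq, mapClusterPt_nhdsWithin_iff_seq]
  constructor
  · rintro ⟨u, hu, hne, hqu, hd⟩
    exact ⟨u, fun n ↦ ⟨hne n, hqu n⟩, hu, hd⟩
  · rintro ⟨u, hmem, hu, hd⟩
    exact ⟨u, hu, fun n ↦ (hmem n).1, fun n ↦ (hmem n).2, hd⟩

end RationalFunction

/-- For a rational function bounded near `v₀`, the set of limiting values is exactly
the closed interval between its infimum and supremum; in particular it is a nonempty
compact interval. -/
theorem limvals_eq_Icc (p q : MvPolynomial (Fin 2) ℝ) (hq : q ≠ 0)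
    (hcop : ∀ d : MvPolynomial (Fin 2) ℝ, d ∣ p → d ∣ q → IsUnit d) (v₀ : ℝ × ℝ)
    (hb : BoundedNear p q v₀) :
    LimVals p q v₀ = Set.Icc (sInf (LimVals p q v₀)) (sSup (LimVals p q v₀)) ∧
    (LimVals p q v₀).Nonempty ∧ IsCompact (LimVals p q v₀) := by
  have hq₀ := hb.eventually_pev_ne_zero hq fun d ↦ hcop d
  obtain ⟨M, hM⟩ := hb.exists_eventually
  have hbd : ∀ᶠ v in 𝓝[≠] v₀, pev p v / pev q v ∈ Set.Icc (-M) M := by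
    filter_upwards [hq₀, nhdsWithin_le_nhds hM] with v hqv hMv
    exact abs_le.1 (hMv hqv)
  have hcont : ∀ᶠ v in 𝓝[≠] v₀, ContinuousAt (fun v ↦ pev p v / pev q v) v :=
    hq₀.mono fun v hqv ↦ (continuous_pev p).continuousAt.div (continuous_pev q).continuousAt hqv
  have hrank : 1 < Module.rank ℝ (ℝ × ℝ) := by
    rw [rank_prod', Module.rank_self]
    norm_num
  rw [limVals_eq_setOfPred_mapClusterPt hq₀]
  set D := {d | MapClusterPt d (𝓝[≠] v₀) fun v ↦ pev p v / pev q v}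
  have hcompact : IsCompact D := isCompact_Icc.of_isClosed_subset isClosed_setOfPred_clusterPt
    (setOfPred_mapClusterPt_subset isClosed_Icc hbd)
  have hnonempty : D.Nonempty :=
    let ⟨d, _, hd⟩ := isCompact_Icc.exists_mapClusterPt (tendsto_principal.2 hbd)
    ⟨d, hd⟩
  have hord : D.OrdConnected := ordConnected_setOfPred_mapClusterPt Metric.nhdsWithin_basis_ball
    (fun _ hr ↦ (isConnected_ball_diff_singleton hrank v₀ hr).isPreconnected) hcont
  exact ⟨eq_Icc_of_connected_compact ⟨hnonempty, hord.isPreconnected⟩ hcompact, hnonempty, hcompact⟩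
end

section
/- Let f = p/q be a rational function of two real variables bounded near (x₀,y₀). Let Φ(t) = Σ_{k=1}^N φ_k |t|^{e_k} be a function of type (i) (N ≥ 0) and let e be a rational number with e ≥ 1 and, if N ≥ 1, e ≥ e_N. Define g(x) = y₀ + Φ(x−x₀) + |x−x₀|^e · ln|x−x₀| for x ≠ x₀. Then both one-sided limits lim_{x→x₀⁺} f(x, g(x)) and lim_{x→x₀⁻} f(x, g(x)) exist and are finite (the curve eventually avoids the zero set of q on each side). -/
open MvPolynomial Filter Topology

/-! Substituting `|x - x₀| = exp (-u)` turns `p` and `q` along either half of the curve into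
exponential polynomials `∑ rₐ(u) exp (a u)`, with `u → ∞`. A nonzero exponential polynomial is
asymptotic to its dominant term `c uⁿ exp (a u)`, so it has no large zeros, and a quotient of two of
them is asymptotic to `c uˢ exp (b u)`, which either converges or is unbounded. The denominator does
not vanish identically because `u` enters the second coordinate of the curve through the product
`u exp (-e u)`: treating the factor `u` as an independent variable, the curve sweeps out full
vertical lines. -/

open Asymptotics

theorem tendsto_rpow_mul_exp_mul_atTop_cases (s b : ℝ) :
    (∃ L, Tendsto (fun u : ℝ => u ^ s * Real.exp (b * u)) atTop (𝓝 L)) ∨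
      Tendsto (fun u : ℝ => u ^ s * Real.exp (b * u)) atTop atTop := by
  rcases lt_trichotomy b 0 with hb | rfl | hb
  · left
    use 0
    simpa using tendsto_rpow_mul_exp_neg_mul_atTop_nhds_zero s (-b) (neg_pos.2 hb)
  · simp only [zero_mul, Real.exp_zero, mul_one]
    rcases lt_trichotomy s 0 with hs | rfl | hs
    · left
      use 0
      simpa using tendsto_rpow_neg_atTop (neg_pos.2 hs)
    · left
      use 1
      simp
    · exact .inr (tendsto_rpow_atTop hs)
  · right
    refine (tendsto_exp_mul_div_rpow_atTop (-s) b hb).congr' ?_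
    filter_upwards [eventually_gt_atTop 0] with u hu
    rw [Real.rpow_neg hu.le, div_inv_eq_mul, mul_comm]

theorem exists_tendsto_of_isEquivalent_of_isBoundedUnder {α : Type*} {l : Filter α}
    {f g : α → ℝ} {c : ℝ} (hc : c ≠ 0) (hfg : f ~[l] fun x => c * g x)
    (hg : (∃ L, Tendsto g l (𝓝 L)) ∨ Tendsto g l atTop)
    (hf : IsBoundedUnder (· ≤ ·) l fun x => ‖f x‖) : ∃ L, Tendsto f l (𝓝 L) := by
  rcases hg with ⟨L, hL⟩ | hg
  · exact ⟨c * L, hfg.symm.tendsto_nhds (hL.const_mul c)⟩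
  · rcases l.eq_or_neBot with rfl | _
    · exact ⟨0, tendsto_bot⟩
    have hg_bigO : g =O[l] fun _ => (1 : ℝ) :=
      (isBigO_const_mul_left_iff hc).1 (hfg.symm.isBigO.trans (hf.isBigO_one ℝ))
    exact absurd hg_bigO.isBoundedUnder_le
      (not_isBoundedUnder_of_tendsto_atTop (tendsto_norm_atTop_atTop.comp hg))

theorem polynomial_mul_exp_isLittleO_pow_mul_exp (r : Polynomial ℝ) (n : ℕ) {a b : ℝ}
    (hba : b < a) :
    (fun u => r.eval u * Real.exp (b * u)) =o[atTop] fun u => u ^ n * Real.exp (a * u) := by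
  have hr : (fun u => r.eval u) =o[atTop] fun u => Real.exp ((a - b) * u) :=
    (r.isEquivalent_atTop_lead.isBigO.trans (isBigO_const_mul_self _ _ _)).trans_isLittleO
      (isLittleO_pow_exp_pos_mul_atTop _ (sub_pos.2 hba))
  have hone : (fun _ => (1 : ℝ)) =O[atTop] fun u : ℝ => u ^ n := by
    refine .of_bound 1 ?_
    filter_upwards [eventually_ge_atTop 1] with u hu
    simpa using (one_le_pow₀ hu).trans (le_abs_self _)
  refine (hone.mul_isLittleO (hr.mul_isBigO (isBigO_refl (fun u => Real.exp (b * u)) _))).congr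
    (fun u => one_mul _) fun u => ?_
  rw [← Real.exp_add, ← add_mul, sub_add_cancel]

theorem map_exp_neg_atTop : map (fun u : ℝ => Real.exp (-u)) atTop = 𝓝[>] 0 := by
  rw [← Real.map_exp_atBot, ← map_neg_atTop, map_map, Function.comp_def]

/-- Real exponential polynomials `∑ rₐ(u) exp (a u)`, with arbitrary real frequencies `a` and
polynomial coefficients `rₐ`, as formal objects: the coefficient at `a` is `rₐ`. -/
abbrev ExpPoly : Type := AddMonoidAlgebra (Polynomial ℝ) ℝ

namespace ExpPoly

open AddMonoidAlgebra (single)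

/-- The value `∑ rₐ(l) exp (a u)` of an exponential polynomial, where the variable `l` of the
coefficients and the variable `u` of the exponentials are kept independent. The function represented
by the exponential polynomial is the diagonal `l = u`. -/
noncomputable def eval (l u : ℝ) : ExpPoly →ₐ[ℝ] ℝ :=
  AddMonoidAlgebra.liftNCAlgHom (Polynomial.aeval l)
    (Real.expMonoidHom.comp (AddMonoidHom.mulRight u).toMultiplicative) fun _ _ => .all _ _

theorem eval_single (l u a : ℝ) (r : Polynomial ℝ) :
    eval l u (single a r) = r.eval l * Real.exp (a * u) := by
  simp [eval, Real.expMonoidHom]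

theorem eval_eq_sum (l u : ℝ) (P : ExpPoly) :
    eval l u P = ∑ a ∈ P.coeff.support, (P.coeff a).eval l * Real.exp (a * u) := by
  conv_lhs => rw [← AddMonoidAlgebra.sum_coeff_single P, Finsupp.sum, map_sum]
  simp only [eval_single]

theorem exists_isEquivalent {P : ExpPoly} (hP : P ≠ 0) :
    ∃ c ≠ 0, ∃ n : ℕ, ∃ a : ℝ,
      (fun u => eval u u P) ~[atTop] fun u => c * (u ^ n * Real.exp (a * u)) := by
  have hsupp : P.coeff.support.Nonempty := by simpa using hP
  obtain ⟨a, ha, ha_max⟩ := P.coeff.support.exists_max_image id hsupp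
  have hc : (P.coeff a).leadingCoeff ≠ 0 := by simpa using ha
  refine ⟨_, hc, (P.coeff a).natDegree, a, ?_⟩
  have hlead : (fun u => (P.coeff a).eval u * Real.exp (a * u)) ~[atTop]
      fun u => (P.coeff a).leadingCoeff * (u ^ (P.coeff a).natDegree * Real.exp (a * u)) :=
    ((P.coeff a).isEquivalent_atTop_lead.mul .refl).congr_right
      (.of_forall fun u => mul_assoc _ _ _)
  have hrest : (fun u => ∑ b ∈ P.coeff.support.erase a, (P.coeff b).eval u * Real.exp (b * u))
      =o[atTop]
      fun u => (P.coeff a).leadingCoeff * (u ^ (P.coeff a).natDegree * Real.exp (a * u)) := by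
    refine .fun_sum fun b hb => (isLittleO_const_mul_right_iff hc).2 ?_
    obtain ⟨hne, hb⟩ := Finset.mem_erase.1 hb
    exact polynomial_mul_exp_isLittleO_pow_mul_exp _ _ ((ha_max b hb).lt_of_ne hne)
  refine (hlead.add_isLittleO hrest).congr_left (.of_forall fun u => ?_)
  simp only [Pi.add_apply, eval_eq_sum]
  exact Finset.add_sum_erase _ (fun b => (P.coeff b).eval u * Real.exp (b * u)) ha

theorem eventually_eval_ne_zero {P : ExpPoly} (hP : P ≠ 0) : ∀ᶠ u in atTop, eval u u P ≠ 0 := by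
  obtain ⟨c, hc, n, a, hequiv⟩ := exists_isEquivalent hP
  filter_upwards [hequiv.symm.isBigO.eq_zero_imp, eventually_gt_atTop 0] with u hu hu0 h0
  exact absurd (hu h0) (by positivity)

theorem exists_tendsto_div {P Q : ExpPoly} (hQ : Q ≠ 0)
    (hbdd : IsBoundedUnder (· ≤ ·) atTop fun u => ‖eval u u P / eval u u Q‖) :
    ∃ L, Tendsto (fun u => eval u u P / eval u u Q) atTop (𝓝 L) := by
  rcases eq_or_ne P 0 with rfl | hP
  · exact ⟨0, by simp⟩
  obtain ⟨c, hc, n, a, hP_equiv⟩ := exists_isEquivalent hP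
  obtain ⟨d, hd, m, b, hQ_equiv⟩ := exists_isEquivalent hQ
  refine exists_tendsto_of_isEquivalent_of_isBoundedUnder (div_ne_zero hc hd)
    ((hP_equiv.div hQ_equiv).congr_right ?_) (tendsto_rpow_mul_exp_mul_atTop_cases (n - m) (a - b))
    hbdd
  filter_upwards [eventually_gt_atTop 0] with u hu
  simp only [Pi.div_apply]
  rw [Real.rpow_sub hu, Real.rpow_natCast, Real.rpow_natCast, sub_mul, Real.exp_sub,
    mul_div_mul_comm, mul_div_mul_comm]

end ExpPoly

theorem eq_zero_of_pev_eq_zero_on_prod {q : MvPolynomial (Fin 2) ℝ} {S T : Set ℝ}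
    (hS : S.Infinite) (hT : T.Infinite) (hq : ∀ x ∈ S, ∀ y ∈ T, pev q (x, y) = 0) : q = 0 := by
  refine MvPolynomial.funext_set ![S, T] (by simp [Fin.forall_fin_two, hS, hT]) fun v hv => ?_
  have hv_eq : v = ![v 0, v 1] := by ext i; fin_cases i <;> rfl
  rw [map_zero, hv_eq]
  exact hq _ (hv 0 trivial) _ (hv 1 trivial)

theorem BoundedNear.isBoundedUnder_div {α : Type*} {l : Filter α} {p q : MvPolynomial (Fin 2) ℝ}
    {v₀ : ℝ × ℝ} (hb : BoundedNear p q v₀) {γ : α → ℝ × ℝ} (hγ : Tendsto γ l (𝓝 v₀))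
    (hne : ∀ᶠ t in l, pev q (γ t) ≠ 0) :
    IsBoundedUnder (· ≤ ·) l fun t => ‖pev p (γ t) / pev q (γ t)‖ := by
  obtain ⟨U, hU, M, hM⟩ := hb
  refine isBoundedUnder_of_eventually_le (a := M) ?_
  filter_upwards [hγ.eventually hU, hne] with t ht hqt using hM _ ht hqt

section LogCurve

open ExpPoly AddMonoidAlgebra

variable {ι : Type*} [Fintype ι] (x₀ y₀ σ : ℝ) (φ ε : ι → ℝ) (e : ℝ)

/-- The curve `y = y₀ + ∑ φₖ |x - x₀| ^ εₖ + |x - x₀| ^ e * log |x - x₀|`, parametrized by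
`t = |x - x₀|`, on the side `x = x₀ + σ t` of `x₀`; the right and left halves are `σ = 1` and
`σ = -1`. -/
noncomputable def logCurve (t : ℝ) : ℝ × ℝ :=
  (x₀ + σ * t, y₀ + ∑ k, φ k * t ^ ε k + t ^ e * Real.log t)

/-- The coordinates of `logCurve`, as exponential polynomials in `u = -log t`. -/
noncomputable def logCurveExpPoly : Fin 2 → ExpPoly :=
  ![algebraMap ℝ ExpPoly x₀ + σ • single (-1) 1,
    algebraMap ℝ ExpPoly y₀ + ∑ k, φ k • single (-ε k) 1 - single (-e) Polynomial.X]

theorem eval_aeval_logCurveExpPoly (l u : ℝ) (p : MvPolynomial (Fin 2) ℝ) :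
    eval l u (aeval (logCurveExpPoly x₀ y₀ σ φ ε e) p) =
      pev p (x₀ + σ * Real.exp (-u),
        y₀ + ∑ k, φ k * Real.exp (-(ε k * u)) - l * Real.exp (-(e * u))) := by
  have hcoord : (fun i => eval l u (logCurveExpPoly x₀ y₀ σ φ ε e i)) =
      ![x₀ + σ * Real.exp (-u),
        y₀ + ∑ k, φ k * Real.exp (-(ε k * u)) - l * Real.exp (-(e * u))] := by
    ext i
    fin_cases i <;> simp [logCurveExpPoly, eval_single]
  rw [MvPolynomial.comp_aeval_apply, hcoord, pev, ← MvPolynomial.coe_aeval_eq_eval, RingHom.coe_coe]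

theorem eval_self_aeval_logCurveExpPoly (u : ℝ) (p : MvPolynomial (Fin 2) ℝ) :
    eval u u (aeval (logCurveExpPoly x₀ y₀ σ φ ε e) p) =
      pev p (logCurve x₀ y₀ σ φ ε e (Real.exp (-u))) := by
  simp [eval_aeval_logCurveExpPoly, logCurve, ← Real.exp_mul, mul_comm, sub_eq_add_neg]

variable {σ} in
theorem aeval_logCurveExpPoly_ne_zero (hσ : σ ≠ 0) {q : MvPolynomial (Fin 2) ℝ} (hq : q ≠ 0) :
    aeval (logCurveExpPoly x₀ y₀ σ φ ε e) q ≠ 0 := by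
  intro hzero
  have habscissa : Function.Injective fun u : ℝ => x₀ + σ * Real.exp (-u) := fun u v huv => by
    simpa [hσ] using huv
  refine hq (eq_zero_of_pev_eq_zero_on_prod (Set.infinite_range_of_injective habscissa)
    Set.infinite_univ ?_)
  rintro _ ⟨u, rfl⟩ y -
  have hpev := eval_aeval_logCurveExpPoly x₀ y₀ σ φ ε e
    ((y₀ + ∑ k, φ k * Real.exp (-(ε k * u)) - y) * Real.exp (e * u)) u q
  rw [hzero, map_zero, mul_assoc, ← Real.exp_add, add_neg_cancel, Real.exp_zero, mul_one,
    sub_sub_cancel] at hpev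
  exact hpev.symm

variable {ε e} in
theorem tendsto_logCurve (hε : ∀ k, 0 < ε k) (he : 0 < e) :
    Tendsto (logCurve x₀ y₀ σ φ ε e) (𝓝[>] 0) (𝓝 (x₀, y₀)) := by
  have hid : Tendsto (fun t : ℝ => t) (𝓝[>] 0) (𝓝 0) := nhdsWithin_le_nhds
  have hpow : ∀ k, Tendsto (fun t : ℝ => φ k * t ^ ε k) (𝓝[>] 0) (𝓝 0) := fun k => by
    simpa [Real.zero_rpow (hε k).ne'] using (hid.rpow_const (.inr (hε k).le)).const_mul (φ k)
  have hlog : Tendsto (fun t : ℝ => t ^ e * Real.log t) (𝓝[>] 0) (𝓝 0) := by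
    simpa only [mul_comm] using tendsto_log_mul_rpow_nhdsGT_zero he
  refine Tendsto.prodMk_nhds ?_ ?_
  · simpa using (hid.const_mul σ).const_add x₀
  · simpa using ((tendsto_finsetSum Finset.univ fun k _ => hpow k).const_add y₀).add hlog

variable {σ}

theorem eventually_pev_logCurve_ne_zero (hσ : σ ≠ 0) {q : MvPolynomial (Fin 2) ℝ} (hq : q ≠ 0) :
    ∀ᶠ t in 𝓝[>] 0, pev q (logCurve x₀ y₀ σ φ ε e t) ≠ 0 := by
  rw [← map_exp_neg_atTop, eventually_map]
  simpa only [eval_self_aeval_logCurveExpPoly] using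
    eventually_eval_ne_zero (aeval_logCurveExpPoly_ne_zero x₀ y₀ φ ε e hσ hq)

variable {x₀ y₀ ε e}

theorem exists_tendsto_pev_div_logCurve (hσ : σ ≠ 0) {p q : MvPolynomial (Fin 2) ℝ} (hq : q ≠ 0)
    (hb : BoundedNear p q (x₀, y₀)) (hε : ∀ k, 0 < ε k) (he : 0 < e) :
    ∃ L, Tendsto (fun t => pev p (logCurve x₀ y₀ σ φ ε e t) / pev q (logCurve x₀ y₀ σ φ ε e t))
      (𝓝[>] 0) (𝓝 L) := by
  have hbdd := hb.isBoundedUnder_div (tendsto_logCurve x₀ y₀ σ φ hε he)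
    (eventually_pev_logCurve_ne_zero x₀ y₀ φ ε e hσ hq)
  rw [← map_exp_neg_atTop] at hbdd ⊢
  simp only [tendsto_map'_iff, Function.comp_def, ← eval_self_aeval_logCurveExpPoly]
  refine exists_tendsto_div (aeval_logCurveExpPoly_ne_zero x₀ y₀ φ ε e hσ hq) ?_
  simpa only [eval_self_aeval_logCurveExpPoly] using! isBoundedUnder_map_iff.1 hbdd

end LogCurve

theorem tendsto_abs_sub_nhdsNE (x₀ : ℝ) : Tendsto (fun x => |x - x₀|) (𝓝[≠] x₀) (𝓝[>] 0) := by
  refine tendsto_nhdsWithin_iff.2 ⟨?_, ?_⟩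
  · exact (Continuous.tendsto' (by fun_prop) _ _ (by simp)).mono_left nhdsWithin_le_nhds
  · filter_upwards [self_mem_nhdsWithin] with x hx using abs_sub_pos.2 hx

theorem log_product_curve_limits_general {p q : MvPolynomial (Fin 2) ℝ} (hq : q ≠ 0) (x₀ y₀ : ℝ)
    (hb : BoundedNear p q (x₀, y₀)) {ι : Type*} [Fintype ι] (φ : ι → ℝ) {ε : ι → ℝ}
    (hε : ∀ k, 0 < ε k) {e : ℝ} (he : 0 < e) :
    let g : ℝ → ℝ := fun x =>
      y₀ + (∑ k, φ k * |x - x₀| ^ ε k) + |x - x₀| ^ e * Real.log |x - x₀|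
    (∀ᶠ x in 𝓝[>] x₀, pev q (x, g x) ≠ 0) ∧
    (∀ᶠ x in 𝓝[<] x₀, pev q (x, g x) ≠ 0) ∧
    (∃ L : ℝ, Tendsto (fun x => pev p (x, g x) / pev q (x, g x)) (𝓝[>] x₀) (𝓝 L)) ∧
    (∃ L : ℝ, Tendsto (fun x => pev p (x, g x) / pev q (x, g x)) (𝓝[<] x₀) (𝓝 L)) := by
  intro g
  have hdist_right := (tendsto_abs_sub_nhdsNE x₀).mono_left (nhdsGT_le_nhdsNE x₀)
  have hdist_left := (tendsto_abs_sub_nhdsNE x₀).mono_left (nhdsLT_le_nhdsNE x₀)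
  have hright : ∀ᶠ x in 𝓝[>] x₀, logCurve x₀ y₀ 1 φ ε e |x - x₀| = (x, g x) := by
    filter_upwards [self_mem_nhdsWithin] with x hx
    exact Prod.ext (by simp [logCurve, abs_of_pos (sub_pos.2 (Set.mem_Ioi.1 hx))]) rfl
  have hleft : ∀ᶠ x in 𝓝[<] x₀, logCurve x₀ y₀ (-1) φ ε e |x - x₀| = (x, g x) := by
    filter_upwards [self_mem_nhdsWithin] with x hx
    exact Prod.ext (by simp [logCurve, abs_of_neg (sub_neg.2 (Set.mem_Iio.1 hx))]) rfl
  have hσ_left : (-1 : ℝ) ≠ 0 := neg_ne_zero.2 one_ne_zero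
  obtain ⟨Lr, hLr⟩ := exists_tendsto_pev_div_logCurve φ one_ne_zero hq hb hε he
  obtain ⟨Ll, hLl⟩ := exists_tendsto_pev_div_logCurve φ hσ_left hq hb hε he
  refine ⟨?_, ?_, ⟨Lr, (hLr.comp hdist_right).congr' ?_⟩, ⟨Ll, (hLl.comp hdist_left).congr' ?_⟩⟩
  · filter_upwards [hright, hdist_right.eventually
      (eventually_pev_logCurve_ne_zero x₀ y₀ φ ε e one_ne_zero hq)] with x hx hne using hx ▸ hne
  · filter_upwards [hleft, hdist_left.eventually
      (eventually_pev_logCurve_ne_zero x₀ y₀ φ ε e hσ_left hq)] with x hx hne using hx ▸ hne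
  · filter_upwards [hright] with x hx using by simp only [Function.comp_apply, hx]
  · filter_upwards [hleft] with x hx using by simp only [Function.comp_apply, hx]

/-- Along the curve `y = y₀ + Φ(x-x₀) + |x-x₀|^e · ln|x-x₀|` with `Φ` of type (i) and
`e` rational (`e ≥ 1`, `e ≥ e_N`), the denominator is eventually nonzero on each side and
the one-sided limits of a rational function bounded near `(x₀,y₀)` exist and are finite. -/
theorem log_product_curve_limits (p q : MvPolynomial (Fin 2) ℝ) (hq : q ≠ 0)
    (hcop : ∀ d : MvPolynomial (Fin 2) ℝ, d ∣ p → d ∣ q → IsUnit d) (x₀ y₀ : ℝ)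
    (hb : BoundedNear p q (x₀, y₀))
    (N : ℕ) (φ : Fin N → ℝ) (ee : Fin N → ℚ)
    (hφ : ∀ k, φ k ≠ 0) (hee : StrictMono ee) (h1 : ∀ k, 1 ≤ ee k)
    (e : ℚ) (he1 : 1 ≤ e) (heN : ∀ k, ee k ≤ e) :
    let g : ℝ → ℝ := fun x =>
      y₀ + (∑ k, φ k * |x - x₀| ^ ((ee k : ℝ))) + |x - x₀| ^ ((e : ℝ)) * Real.log |x - x₀|
    (∀ᶠ x in 𝓝[>] x₀, pev q (x, g x) ≠ 0) ∧
    (∀ᶠ x in 𝓝[<] x₀, pev q (x, g x) ≠ 0) ∧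
    (∃ L : ℝ, Tendsto (fun x => pev p (x, g x) / pev q (x, g x)) (𝓝[>] x₀) (𝓝 L)) ∧
    (∃ L : ℝ, Tendsto (fun x => pev p (x, g x) / pev q (x, g x)) (𝓝[<] x₀) (𝓝 L)) :=
  log_product_curve_limits_general hq x₀ y₀ hb φ
    (fun k => Rat.cast_pos.2 (one_pos.trans_le (h1 k))) (Rat.cast_pos.2 (one_pos.trans_le he1))
end
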